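/- Let 2 ≤ a ≤ b ≤ c be integers with c < lcm(a,b), and define s₁ = min over 1 ≤ k ≤ ⌊c/b⌋ of (1/b + ⌈kb/a⌉/(kb)), s₂ = min over 1 ≤ k ≤ ⌊c/a⌋ of (1/a + ⌈ka/b⌉/(ka)), and s₃ = (⌈c/a⌉ + ⌈c/b⌉)/c. Then the minimum over all positive integer triples (p,q,r) of (p + q + r − 1)/min(ap, bq, cr), capped at 1, equals min(s₁, s₂, s₃, 1). -/

import Mathlib

/-- The candidate canonical threshold of the Brieskorn singularity
`x^a + y^b + z^c = 0` computed at the weight vector `(p, q, r)`. -/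
noncomputable def brieskornH (a b c p q r : ℕ) : ℝ :=
  ((p : ℝ) + q + r - 1) / min ((a : ℝ) * p) (min ((b : ℝ) * q) ((c : ℝ) * r))

/-- The set of values of `brieskornH a b c` over all positive integer weight triples. -/
def brieskornVals (a b c : ℕ) : Set ℝ :=
  {x | ∃ p q r : ℕ, 0 < p ∧ 0 < q ∧ 0 < r ∧ x = brieskornH a b c p q r}

/-!
A real number `D` bounds the values at all weights `(p, q, r)` from below as soon as it does so at
the weights `(p, q, 1)`, and these fall into three families according to which of `b q`, `a p`, `c`
is the smallest; the families give `s₁`, `s₂` and `s₃`.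

For the reduction to `r = 1`, take consecutive Farey vectors `(p₁, q₁)` and `(p₂, q₂)` on the two
sides of the ray `a p = b q`, with `a p₁ ≤ c` and `b q₂ ≤ c`, whose mediant `(p₁ + p₂, q₁ + q₂)`
satisfies `c < a (p₁ + p₂)` and `c < b (q₁ + q₂)`. If the bound at `(p, q, r)` follows neither from
the one at `(p₁, q₁, 1)` nor from the one at `(p₂, q₂, 1)`, then `(p, q)` has such large coordinates
in the unimodular basis formed by these two vectors that it follows from the bound at the mediant.
-/

/-- Unimodular vectors `(p₁, q₁)`, `(p₂, q₂)` on either side of the ray `a p = b q`, i.e. Farey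
neighbours `q₂ / p₂ ≤ a / b ≤ q₁ / p₁`, at both of which `min (a p) (b q)` is at most `c`. The
degenerate fractions `1 / 0` and `0 / 1` are allowed. -/
structure IsFareyBracket (a b c p₁ q₁ p₂ q₂ : ℕ) : Prop where
  det_eq_one : q₁ * p₂ = p₁ * q₂ + 1
  upper_le : a * p₁ ≤ b * q₁
  upper_le_bound : a * p₁ ≤ c
  lower_le : b * q₂ ≤ a * p₂
  lower_le_bound : b * q₂ ≤ c

section Farey

variable {a b c p₁ q₁ p₂ q₂ : ℕ}

namespace IsFareyBracket

lemma upper_den_pos (h : IsFareyBracket a b c p₁ q₁ p₂ q₂) (hac : a ≤ c)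
    (hc : c < a * (p₁ + p₂)) : 0 < p₁ := by
  rcases Nat.eq_zero_or_pos p₁ with rfl | hp₁
  · have hp₂ : p₂ = 1 := Nat.eq_one_of_mul_eq_one_left (by simpa using h.det_eq_one)
    subst hp₂
    omega
  · exact hp₁

lemma lower_num_pos (h : IsFareyBracket a b c p₁ q₁ p₂ q₂) (hbc : b ≤ c)
    (hc : c < b * (q₁ + q₂)) : 0 < q₂ := by
  rcases Nat.eq_zero_or_pos q₂ with rfl | hq₂
  · have hq₁ : q₁ = 1 := Nat.eq_one_of_mul_eq_one_right (by simpa using h.det_eq_one)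
    subst hq₁
    omega
  · exact hq₂

lemma mediant_replaces_upper (h : IsFareyBracket a b c p₁ q₁ p₂ q₂)
    (hle : a * (p₁ + p₂) ≤ b * (q₁ + q₂)) (hc : a * (p₁ + p₂) ≤ c) :
    IsFareyBracket a b c (p₁ + p₂) (q₁ + q₂) p₂ q₂ :=
  { h with
    det_eq_one := by linarith [h.det_eq_one]
    upper_le := hle
    upper_le_bound := hc }

lemma mediant_replaces_lower (h : IsFareyBracket a b c p₁ q₁ p₂ q₂)
    (hle : b * (q₁ + q₂) ≤ a * (p₁ + p₂)) (hc : b * (q₁ + q₂) ≤ c) :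
    IsFareyBracket a b c p₁ q₁ (p₁ + p₂) (q₁ + q₂) :=
  { h with
    det_eq_one := by linarith [h.det_eq_one]
    lower_le := hle
    lower_le_bound := hc }

lemma add_le_two_mul (h : IsFareyBracket a b c p₁ q₁ p₂ q₂) (ha : 0 < a) (hb : 0 < b) :
    p₁ + q₂ ≤ 2 * c := by
  have hp₁ : p₁ ≤ c := (Nat.le_mul_of_pos_left p₁ ha).trans h.upper_le_bound
  have hq₂ : q₂ ≤ c := (Nat.le_mul_of_pos_left q₂ hb).trans h.lower_le_bound
  omega

lemma exists_lt_mediant (h : IsFareyBracket a b c p₁ q₁ p₂ q₂) (ha : 0 < a) (hb : 0 < b) :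
    ∃ p₁ q₁ p₂ q₂, IsFareyBracket a b c p₁ q₁ p₂ q₂ ∧
      c < a * (p₁ + p₂) ∧ c < b * (q₁ + q₂) := by
  induction hn : 2 * c - (p₁ + q₂) using Nat.strong_induction_on generalizing p₁ q₁ p₂ q₂ with
  | _ n ih =>
    have hpos : 0 < q₁ * p₂ := by rw [h.det_eq_one]; exact Nat.succ_pos _
    have hq₁ : 0 < q₁ := pos_of_mul_pos_left hpos (Nat.zero_le _)
    have hp₂ : 0 < p₂ := pos_of_mul_pos_right hpos (Nat.zero_le _)
    rcases le_total (a * (p₁ + p₂)) (b * (q₁ + q₂)) with hle | hle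
    · rcases le_or_gt (a * (p₁ + p₂)) c with hc | hc
      · have h' := h.mediant_replaces_upper hle hc
        have := h'.add_le_two_mul ha hb
        exact ih _ (by omega) h' rfl
      · exact ⟨p₁, q₁, p₂, q₂, h, hc, hc.trans_le hle⟩
    · rcases le_or_gt (b * (q₁ + q₂)) c with hc | hc
      · have h' := h.mediant_replaces_lower hle hc
        have := h'.add_le_two_mul ha hb
        exact ih _ (by omega) h' rfl
      · exact ⟨p₁, q₁, p₂, q₂, h, hc.trans_le hle, hc⟩

end IsFareyBracket

lemma exists_isFareyBracket_lt_mediant (ha : 0 < a) (hb : 0 < b) :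
    ∃ p₁ q₁ p₂ q₂, IsFareyBracket a b c p₁ q₁ p₂ q₂ ∧
      c < a * (p₁ + p₂) ∧ c < b * (q₁ + q₂) :=
  have trivialBracket : IsFareyBracket a b c 0 1 1 0 := by constructor <;> simp
  trivialBracket.exists_lt_mediant ha hb

end Farey

section Reduction

/-- `D` bounds from below the values at the weights `(p, q, 1)` where `b q` is the smallest of
`a p`, `b q`, `c`. The weights where `a p` is the smallest are covered by `IsEdgeBound b a c D`. -/
def IsEdgeBound (a b c : ℕ) (D : ℝ) : Prop :=
  ∀ p q : ℕ, 0 < q → b * q ≤ c → b * q ≤ a * p → D * (b * q) ≤ p + q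

/-- `D` bounds from below the values at the weights `(p, q, 1)` where `c` is the smallest of
`a p`, `b q`, `c`. -/
def IsVertexBound (a b c : ℕ) (D : ℝ) : Prop :=
  ∀ p q : ℕ, c ≤ a * p → c ≤ b * q → D * c ≤ p + q

lemma mul_le_add_of_edge_point {D a m p q s p₁ q₁ : ℝ} (hD : 0 ≤ D) (hp₁ : 0 < p₁) (hp : 0 ≤ p)
    (hm : m ≤ a * p) (hedge : D * (a * p₁) ≤ p₁ + q₁) (hslope : p * q₁ ≤ p₁ * (q + s)) :
    D * m ≤ p + q + s := by
  refine le_of_mul_le_mul_left ?_ hp₁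
  calc p₁ * (D * m) ≤ p₁ * (D * (a * p)) := by gcongr
    _ = p * (D * (a * p₁)) := by ring
    _ ≤ p * (p₁ + q₁) := by gcongr
    _ ≤ p₁ * (p + q + s) := by linarith

-- In the unimodular basis, `(p, q) = x (p₁, q₁) + y (p₂, q₂)` with `x = q p₂ - q₂ p > q₂ s` and
-- `y = p q₁ - p₁ q > p₁ s`.
lemma mul_mediant_le_add_of_det_eq_one {p q s p₁ q₁ p₂ q₂ : ℕ} (hdet : q₁ * p₂ = p₁ * q₂ + 1)
    (hp₁ : 0 < p₁) (hq₂ : 0 < q₂) (hy : p₁ * (q + s) < p * q₁) (hx : q₂ * (p + s) < q * p₂) :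
    (s + 1) * ((p₁ + p₂) + (q₁ + q₂)) ≤ p + q := by
  obtain ⟨x, hx⟩ := Nat.exists_eq_add_of_lt hx
  obtain ⟨y, hy⟩ := Nat.exists_eq_add_of_lt hy
  have hp : p = (q₂ * s + x + 1) * p₁ + (p₁ * s + y + 1) * p₂ := by
    zify at *
    linear_combination p₁ * hx + p₂ * hy - p * hdet
  have hq : q = (q₂ * s + x + 1) * q₁ + (p₁ * s + y + 1) * q₂ := by
    zify at *
    linear_combination q₁ * hx + q₂ * hy - q * hdet
  have hmediant : (p₁ + p₂) + (q₁ + q₂) ≤ q₂ * (p₁ + q₁) + p₁ * (p₂ + q₂) := by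
    linarith [Nat.le_mul_of_pos_left (p₁ + q₁) hq₂, Nat.le_mul_of_pos_left (p₂ + q₂) hp₁]
  calc (s + 1) * ((p₁ + p₂) + (q₁ + q₂))
      = s * ((p₁ + p₂) + (q₁ + q₂)) + ((p₁ + q₁) + (p₂ + q₂)) := by ring
    _ ≤ s * (q₂ * (p₁ + q₁) + p₁ * (p₂ + q₂)) + ((p₁ + q₁) + (p₂ + q₂)) := by gcongr
    _ = (q₂ * s + 1) * (p₁ + q₁) + (p₁ * s + 1) * (p₂ + q₂) := by ring
    _ ≤ (q₂ * s + x + 1) * (p₁ + q₁) + (p₁ * s + y + 1) * (p₂ + q₂) := by gcongr <;> omega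
    _ = p + q := by rw [hp, hq]; ring

variable {a b c : ℕ} {D : ℝ}

lemma mul_le_add_of_isEdgeBound_of_isVertexBound (ha : 0 < a) (hb : 0 < b) (hac : a ≤ c)
    (hbc : b ≤ c) (hD : 0 ≤ D) (hedge_y : IsEdgeBound a b c D) (hedge_x : IsEdgeBound b a c D)
    (hvertex : IsVertexBound a b c D) {p q s : ℕ} {m : ℝ} (hmp : m ≤ a * p) (hmq : m ≤ b * q)
    (hms : m ≤ c * (s + 1)) : D * m ≤ p + q + s := by
  obtain ⟨p₁, q₁, p₂, q₂, hF, hcp, hcq⟩ := exists_isFareyBracket_lt_mediant (c := c) ha hb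
  have hp₁ : 0 < p₁ := hF.upper_den_pos hac hcp
  have hq₂ : 0 < q₂ := hF.lower_num_pos hbc hcq
  rcases le_or_gt (p * q₁) (p₁ * (q + s)) with hslope | hy
  · have hbound := hedge_x q₁ p₁ hp₁ hF.upper_le_bound hF.upper_le
    exact mul_le_add_of_edge_point hD (by exact_mod_cast hp₁) p.cast_nonneg hmp
      (hbound.trans_eq (add_comm _ _)) (by exact_mod_cast hslope)
  rcases le_or_gt (q * p₂) (q₂ * (p + s)) with hslope | hx
  · have hbound := hedge_y p₂ q₂ hq₂ hF.lower_le_bound hF.lower_le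
    rw [add_comm (p : ℝ)]
    exact mul_le_add_of_edge_point hD (by exact_mod_cast hq₂) q.cast_nonneg hmq
      (hbound.trans_eq (add_comm _ _)) (by exact_mod_cast hslope)
  calc D * m ≤ D * (c * (s + 1)) := by gcongr
    _ = (s + 1) * (D * c) := by ring
    _ ≤ (s + 1) * ((p₁ + p₂ : ℕ) + (q₁ + q₂ : ℕ)) := by
      gcongr
      exact hvertex _ _ hcp.le hcq.le
    _ ≤ p + q := by
      exact_mod_cast mul_mediant_le_add_of_det_eq_one hF.det_eq_one hp₁ hq₂ hy hx
    _ ≤ p + q + s := le_add_of_nonneg_right s.cast_nonneg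

lemma mul_min_le_of_isEdgeBound_of_isVertexBound (ha : 0 < a) (hb : 0 < b) (hac : a ≤ c)
    (hbc : b ≤ c) (hedge_y : IsEdgeBound a b c D) (hedge_x : IsEdgeBound b a c D)
    (hvertex : IsVertexBound a b c D) {p q r : ℕ} (hr : 0 < r) :
    D * min ((a : ℝ) * p) (min ((b : ℝ) * q) ((c : ℝ) * r)) ≤ (p : ℝ) + q + r - 1 := by
  obtain ⟨s, rfl⟩ := Nat.exists_eq_succ_of_ne_zero hr.ne'
  have hsucc : (p : ℝ) + q + (s.succ : ℕ) - 1 = p + q + s := by push_cast; ring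
  rw [hsucc]
  rcases le_total 0 D with hD | hD
  · refine mul_le_add_of_isEdgeBound_of_isVertexBound ha hb hac hbc hD hedge_y hedge_x hvertex
      (min_le_left _ _) ((min_le_right _ _).trans (min_le_left _ _)) ?_
    exact_mod_cast (min_le_right _ _).trans (min_le_right _ _)
  · exact (mul_nonpos_of_nonpos_of_nonneg hD (by positivity)).trans (by positivity)

end Reduction

section LowerBounds

variable {a b c : ℕ} {D : ℝ}

lemma le_brieskornH_iff {p q r : ℕ} (ha : 0 < a) (hb : 0 < b) (hc : 0 < c) (hp : 0 < p)
    (hq : 0 < q) (hr : 0 < r) :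
    D ≤ brieskornH a b c p q r ↔
      D * min ((a : ℝ) * p) (min ((b : ℝ) * q) ((c : ℝ) * r)) ≤ (p : ℝ) + q + r - 1 :=
  le_div_iff₀ (by positivity)

lemma brieskornH_nonneg {p q r : ℕ} (hp : 0 < p) : 0 ≤ brieskornH a b c p q r := by
  have hp' : (1 : ℝ) ≤ p := by exact_mod_cast hp
  have hnum : (0 : ℝ) ≤ (p : ℝ) + q + r - 1 := by
    linarith [q.cast_nonneg (α := ℝ), r.cast_nonneg (α := ℝ)]
  exact div_nonneg hnum (by positivity)

lemma brieskornH_swap (p q r : ℕ) : brieskornH b a c q p r = brieskornH a b c p q r := by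
  simp only [brieskornH, min_left_comm, add_comm]

lemma le_sInf_brieskornVals_iff :
    D ≤ sInf (brieskornVals a b c) ↔
      ∀ p q r : ℕ, 0 < p → 0 < q → 0 < r → D ≤ brieskornH a b c p q r := by
  have hbdd : BddBelow (brieskornVals a b c) :=
    ⟨0, by rintro _ ⟨p, q, r, hp, -, -, rfl⟩; exact brieskornH_nonneg hp⟩
  have hne : (brieskornVals a b c).Nonempty := ⟨_, 1, 1, 1, one_pos, one_pos, one_pos, rfl⟩
  rw [le_csInf_iff hbdd hne]
  constructor
  · exact fun h p q r hp hq hr => h _ ⟨p, q, r, hp, hq, hr, rfl⟩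
  · rintro h _ ⟨p, q, r, hp, hq, hr, rfl⟩
    exact h p q r hp hq hr

lemma isEdgeBound_of_le_brieskornH (ha : 0 < a) (hb : 0 < b) (hc : 0 < c)
    (h : ∀ p q : ℕ, 0 < p → 0 < q → D ≤ brieskornH a b c p q 1) : IsEdgeBound a b c D := by
  intro p q hq hqc hqp
  have hp : 0 < p := pos_of_mul_pos_right ((Nat.mul_pos hb hq).trans_le hqp) a.zero_le
  have hqc' : (b : ℝ) * q ≤ c := by exact_mod_cast hqc
  have hqp' : (b : ℝ) * q ≤ a * p := by exact_mod_cast hqp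
  simpa [min_eq_left hqc', min_eq_right hqp'] using
    (le_brieskornH_iff ha hb hc hp hq one_pos).1 (h p q hp hq)

lemma isVertexBound_of_le_brieskornH (ha : 0 < a) (hb : 0 < b) (hc : 0 < c)
    (h : ∀ p q : ℕ, 0 < p → 0 < q → D ≤ brieskornH a b c p q 1) : IsVertexBound a b c D := by
  intro p q hcp hcq
  have hp : 0 < p := pos_of_mul_pos_right (hc.trans_le hcp) a.zero_le
  have hq : 0 < q := pos_of_mul_pos_right (hc.trans_le hcq) b.zero_le
  have hcp' : (c : ℝ) ≤ a * p := by exact_mod_cast hcp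
  have hcq' : (c : ℝ) ≤ b * q := by exact_mod_cast hcq
  simpa [min_eq_right hcq', min_eq_right hcp'] using
    (le_brieskornH_iff ha hb hc hp hq one_pos).1 (h p q hp hq)

lemma le_sInf_brieskornVals_iff_isEdgeBound_and_isVertexBound (ha : 0 < a) (hb : 0 < b)
    (hac : a ≤ c) (hbc : b ≤ c) :
    D ≤ sInf (brieskornVals a b c) ↔
      (IsEdgeBound a b c D ∧ IsEdgeBound b a c D) ∧ IsVertexBound a b c D := by
  have hc : 0 < c := ha.trans_le hac
  rw [le_sInf_brieskornVals_iff]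
  constructor
  · intro h
    have hone (p q : ℕ) (hp : 0 < p) (hq : 0 < q) : D ≤ brieskornH a b c p q 1 :=
      h p q 1 hp hq one_pos
    refine ⟨⟨isEdgeBound_of_le_brieskornH ha hb hc hone,
      isEdgeBound_of_le_brieskornH hb ha hc fun q p hq hp => ?_⟩,
      isVertexBound_of_le_brieskornH ha hb hc hone⟩
    exact (hone p q hp hq).trans_eq (brieskornH_swap p q 1).symm
  · rintro ⟨⟨hedge_y, hedge_x⟩, hvertex⟩ p q r hp hq hr
    exact (le_brieskornH_iff ha hb hc hp hq hr).2
      (mul_min_le_of_isEdgeBound_of_isVertexBound ha hb hac hbc hedge_y hedge_x hvertex hr)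

end LowerBounds

section Ceilings

variable {a b c : ℕ} {D : ℝ}

lemma le_ceil_natCast_div_iff {t d : ℕ} {x : ℝ} (hd : 0 < d) :
    x ≤ (⌈(t : ℝ) / (d : ℝ)⌉ : ℝ) ↔ ∀ p : ℕ, t ≤ d * p → x ≤ p := by
  have hd' : (0 : ℝ) < d := by exact_mod_cast hd
  have hceil (p : ℕ) : ⌈(t : ℝ) / d⌉₊ ≤ p ↔ t ≤ d * p := by
    rw [Nat.ceil_le, div_le_iff₀' hd']
    exact_mod_cast Iff.rfl
  rw [← natCast_ceil_eq_intCast_ceil (by positivity : 0 ≤ (t : ℝ) / d)]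
  constructor
  · exact fun hx p hp => hx.trans (by exact_mod_cast (hceil p).2 hp)
  · exact fun h => h _ ((hceil _).1 le_rfl)

lemma le_edge_value_iff {k : ℕ} (ha : 0 < a) (hb : 0 < b) (hk : 0 < k) :
    D ≤ 1 / (b : ℝ) + (⌈((k * b : ℕ) : ℝ) / (a : ℝ)⌉ : ℝ) / ((k * b : ℕ) : ℝ) ↔
      ∀ p : ℕ, b * k ≤ a * p → D * (b * k) ≤ p + k := by
  have hkb : (0 : ℝ) < (k * b : ℕ) := by exact_mod_cast Nat.mul_pos hk hb
  have hone_div : 1 / (b : ℝ) = k / (k * b : ℕ) := by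
    push_cast
    field_simp
  rw [hone_div, ← add_div, le_div_iff₀ hkb, ← sub_le_iff_le_add', le_ceil_natCast_div_iff ha]
  simp only [mul_comm k b, sub_le_iff_le_add, Nat.cast_mul]

lemma le_sInf_edge_values_iff_isEdgeBound (ha : 0 < a) (hb : 0 < b) (hbc : b ≤ c) :
    D ≤ sInf {x : ℝ | ∃ k : ℕ, 1 ≤ k ∧ k ≤ c / b ∧
      x = 1 / (b : ℝ) + (⌈((k * b : ℕ) : ℝ) / (a : ℝ)⌉ : ℝ) / ((k * b : ℕ) : ℝ)} ↔
      IsEdgeBound a b c D := by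
  refine (le_csInf_iff ?bddBelow ?nonempty).trans ⟨?_, ?_⟩
  case nonempty => exact ⟨_, 1, le_rfl, Nat.div_pos hbc hb, rfl⟩
  case bddBelow =>
    refine ⟨0, ?_⟩
    rintro _ ⟨k, hk, -, rfl⟩
    refine (le_edge_value_iff ha hb hk).2 fun p _ => ?_
    rw [zero_mul]
    positivity
  · intro h p q hq hqc
    have hqdiv : q ≤ c / b := (Nat.le_div_iff_mul_le hb).2 ((mul_comm q b).trans_le hqc)
    exact (le_edge_value_iff ha hb hq).1 (h _ ⟨q, hq, hqdiv, rfl⟩) p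
  · rintro h _ ⟨k, hk, hkc, rfl⟩
    have hbk : b * k ≤ c := (mul_comm b k).trans_le ((Nat.le_div_iff_mul_le hb).1 hkc)
    exact (le_edge_value_iff ha hb hk).2 fun p => h p k hk hbk

lemma le_vertex_value_iff_isVertexBound (ha : 0 < a) (hb : 0 < b) (hc : 0 < c) :
    D ≤ ((⌈(c : ℝ) / (a : ℝ)⌉ : ℝ) + (⌈(c : ℝ) / (b : ℝ)⌉ : ℝ)) / (c : ℝ) ↔
      IsVertexBound a b c D := by
  rw [le_div_iff₀ (by exact_mod_cast hc), ← sub_le_iff_le_add, le_ceil_natCast_div_iff ha]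
  simp only [sub_le_comm (b := (⌈(c : ℝ) / (b : ℝ)⌉ : ℝ)), le_ceil_natCast_div_iff hb,
    sub_le_iff_le_add']
  exact ⟨fun h p q hp hq => h p hp q hq, fun h p hp q hq => h p q hp hq⟩

end Ceilings

theorem brieskorn_ct_formula_general (a b c : ℕ) (ha : 0 < a) (hb : 0 < b) (hac : a ≤ c)
    (hbc : b ≤ c) (s₁ s₂ s₃ : ℝ)
    (hs₁ : s₁ = sInf {x : ℝ | ∃ k : ℕ, 1 ≤ k ∧ k ≤ c / b ∧
      x = 1 / (b : ℝ) + (⌈((k * b : ℕ) : ℝ) / (a : ℝ)⌉ : ℝ) / ((k * b : ℕ) : ℝ)})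
    (hs₂ : s₂ = sInf {x : ℝ | ∃ k : ℕ, 1 ≤ k ∧ k ≤ c / a ∧
      x = 1 / (a : ℝ) + (⌈((k * a : ℕ) : ℝ) / (b : ℝ)⌉ : ℝ) / ((k * a : ℕ) : ℝ)})
    (hs₃ : s₃ = ((⌈(c : ℝ) / (a : ℝ)⌉ : ℝ) + (⌈(c : ℝ) / (b : ℝ)⌉ : ℝ)) / (c : ℝ)) :
    sInf (brieskornVals a b c) = min (min s₁ s₂) s₃ := by
  refine eq_of_forall_le_iff fun D => ?_
  rw [le_sInf_brieskornVals_iff_isEdgeBound_and_isVertexBound ha hb hac hbc, le_min_iff, le_min_iff,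
    hs₁, hs₂, hs₃, le_sInf_edge_values_iff_isEdgeBound ha hb hbc,
    le_sInf_edge_values_iff_isEdgeBound hb ha hac,
    le_vertex_value_iff_isVertexBound ha hb (ha.trans_le hac)]

theorem brieskorn_ct_formula (a b c : ℕ) (ha : 2 ≤ a) (hab : a ≤ b) (hbc : b ≤ c)
    (hlcm : c < Nat.lcm a b)
    (s₁ s₂ s₃ : ℝ)
    (hs₁ : s₁ = sInf {x : ℝ | ∃ k : ℕ, 1 ≤ k ∧ k ≤ c / b ∧
      x = 1 / (b : ℝ) + (⌈((k * b : ℕ) : ℝ) / (a : ℝ)⌉ : ℝ) / ((k * b : ℕ) : ℝ)})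
    (hs₂ : s₂ = sInf {x : ℝ | ∃ k : ℕ, 1 ≤ k ∧ k ≤ c / a ∧
      x = 1 / (a : ℝ) + (⌈((k * a : ℕ) : ℝ) / (b : ℝ)⌉ : ℝ) / ((k * a : ℕ) : ℝ)})
    (hs₃ : s₃ = ((⌈(c : ℝ) / (a : ℝ)⌉ : ℝ) + (⌈(c : ℝ) / (b : ℝ)⌉ : ℝ)) / (c : ℝ)) :
    min (sInf (brieskornVals a b c)) 1 = min (min s₁ s₂) (min s₃ 1) := by
  have hformula : sInf (brieskornVals a b c) = min (min s₁ s₂) s₃ :=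
    brieskorn_ct_formula_general a b c (by omega) (by omega) (hab.trans hbc) hbc
      s₁ s₂ s₃ hs₁ hs₂ hs₃
  rw [hformula, min_assoc]
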